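/- Let G be a finite simple connected graph in which every vertex has even degree, suppose G has an odd number of edges, and let u_G be any fixed vertex of G. Then G admits a 2-edge-coloring c : E(G) → {1,2} such that, for every vertex u of G distinct from u_G and each color α ∈ {1,2}, exactly d_G(u)/2 of the edges incident with u have color α, while at u_G one of the two colors appears on exactly d_G(u_G)/2 + 1 of the incident edges and the other on exactly d_G(u_G)/2 − 1 of them. -/

import Mathlib

/-!
A connected graph with all degrees even has an Eulerian circuit, and it may be taken to start
at `uG`. Color its edges alternately. Every passage through a vertex in the interior of the circuit
uses one edge of each color; since the number of edges is odd, the first and the last edge, which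
both meet `uG`, have the same color. Hence the two color counts agree at every vertex other
than `uG` and differ by two at `uG`.

The circuit is a longest trail: its last vertex has no unused edge, so by parity it is closed
(`closed_of_longest_trail`), and by connectivity an unused edge could be chosen to touch the circuit,
which, rotated to that point, would then extend (`longest_trail_isEulerian`).
The counting along the trail is `exists_alternating_coloring`, stated with signs `1` and `-1` in place
of the colors `0` and `1`.
-/

open SimpleGraph

/-- The value `1` for color `0` and `-1` for color `1`. -/
def colorSign (a : Fin 2) : ℤ := if a = 0 then 1 else -1

/-- Alternating the colors along a trail from `u` to `v`, starting with color `0`, makes the signed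
number of edges at `x` telescope to the contributions of the first and the last edge. -/
lemma exists_alternating_coloring {V : Type*} [DecidableEq V] {G : SimpleGraph V} {u v : V}
    (p : G.Walk u v) (hp : p.IsTrail) :
    ∃ c : Sym2 V → Fin 2, ∀ x : V,
      (p.edges.map (fun e => if x ∈ e then colorSign (c e) else 0)).sum =
        (if x = u then 1 else 0) - (-1) ^ p.length * (if x = v then 1 else 0) := by
  induction p with
  | nil => exact ⟨fun _ => 0, fun x => by simp⟩
  | @cons u w v h p ih =>
    rw [Walk.isTrail_cons] at hp
    obtain ⟨c, hc⟩ := ih hp.1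
    refine ⟨Function.update (fun e => 1 - c e) s(u, w) 0, fun x => ?_⟩
    have hmap : p.edges.map (fun e => if x ∈ e then
        colorSign (Function.update (fun e => 1 - c e) s(u, w) 0 e) else 0) =
        p.edges.map (fun e => - (if x ∈ e then colorSign (c e) else 0)) := by
      refine List.map_congr_left fun e he => ?_
      have hne : e ≠ s(u, w) := fun h' => hp.2 (h' ▸ he)
      rw [Function.update_of_ne hne]
      have hflip : ∀ a : Fin 2, colorSign (1 - a) = - colorSign a := by decide
      split_ifs <;> simp [hflip]
    have hneg : (p.edges.map (fun e => - (if x ∈ e then colorSign (c e) else 0))).sum =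
        - (p.edges.map (fun e => if x ∈ e then colorSign (c e) else 0)).sum := by
      generalize p.edges = l
      induction l with
      | nil => simp
      | cons a l ihl => simp only [List.map_cons, List.sum_cons, ihl]; ring
    rw [Walk.edges_cons, List.map_cons, List.sum_cons, hmap, hneg, hc, Walk.length_cons, pow_succ]
    have huw : u ≠ w := h.ne
    have h0 : colorSign 0 = 1 := rfl
    simp only [Function.update_self, h0, Sym2.mem_iff]
    have hend : (if x = u ∨ x = w then (1 : ℤ) else 0) =
        (if x = u then 1 else 0) + (if x = w then 1 else 0) := by
      by_cases h1 : x = u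
      · have h2 : x ≠ w := h1 ▸ huw
        rw [if_pos (Or.inl h1), if_pos h1, if_neg h2, add_zero]
      · simp [h1]
    rw [hend]
    ring

/-- At the end vertex `v` of a longest trail all edges are used, so an even degree at `v`
forces the trail to be closed. -/
lemma closed_of_longest_trail {V : Type*} [Fintype V] [DecidableEq V] (G : SimpleGraph V)
    [DecidableRel G.Adj] (heven : ∀ u : V, Even (G.degree u)) {u v : V} (p : G.Walk u v)
    (hp : p.IsTrail)
    (hmax : ∀ (a b : V) (q : G.Walk a b), q.IsTrail → q.length ≤ p.length) : u = v := by
  by_contra hne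
  have hall : ∀ w, G.Adj v w → s(v, w) ∈ p.edges := by
    intro w hw
    by_contra hmem
    have hq : (Walk.cons hw.symm p.reverse).IsTrail := by
      rw [Walk.isTrail_cons]
      exact ⟨hp.reverse, by simpa [Sym2.eq_swap] using hmem⟩
    have := hmax _ _ _ hq
    simp at this
  have hiff := hp.even_countP_edges_iff v
  have hset : G.incidenceFinset v = p.edges.toFinset.filter (fun e => v ∈ e) := by
    ext e
    simp only [mem_incidenceFinset, Finset.mem_filter, List.mem_toFinset]
    constructor
    · rintro ⟨he, hv⟩
      refine ⟨?_, hv⟩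
      obtain ⟨w, rfl⟩ := hv
      exact hall w he
    · rintro ⟨he, hv⟩
      exact ⟨p.edges_subset_edgeSet he, hv⟩
  have hcount : p.edges.countP (fun e => v ∈ e) = G.degree v := by
    rw [← card_incidenceFinset_eq_degree, hset, List.countP_eq_length_filter,
      ← List.toFinset_card_of_nodup (hp.edges_nodup.filter _), List.toFinset_filter]
    simp
  rw [hcount] at hiff
  exact (hiff.1 (heven v) hne).2 rfl

lemma longest_trail_isEulerian {V : Type*} [DecidableEq V] (G : SimpleGraph V)
    (hconn : G.Connected) {u : V} (p : G.Walk u u) (hp : p.IsTrail)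
    (hmax : ∀ (a b : V) (q : G.Walk a b), q.IsTrail → q.length ≤ p.length) : p.IsEulerian := by
  have hall : ∀ x y, x ∈ p.support → G.Adj x y → s(x, y) ∈ p.edges := by
    intro x y hx hxy
    by_contra hmem
    have hq : (Walk.cons hxy.symm (p.rotate x hx)).IsTrail := by
      rw [Walk.isTrail_cons]
      refine ⟨hp.rotate hx, ?_⟩
      rw [(p.rotate_edges x hx).perm.mem_iff, Sym2.eq_swap]
      exact hmem
    have := hmax _ _ _ hq
    simp at this
  have hsupp : ∀ x, x ∈ p.support := by
    intro x
    by_contra hx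
    obtain ⟨w⟩ := hconn.preconnected u x
    obtain ⟨d, -, hd1, hd2⟩ :=
      w.exists_boundary_dart {y | y ∈ p.support} p.start_mem_support hx
    exact hd2 (p.snd_mem_support_of_mem_edges (hall _ _ hd1 d.adj))
  refine hp.isEulerian_of_forall_mem fun e he => ?_
  induction e with
  | _ x y => exact hall x y (hsupp x) he

lemma exists_eulerian_circuit {V : Type*} [Fintype V] [DecidableEq V] (G : SimpleGraph V)
    [DecidableRel G.Adj] (hconn : G.Connected) (heven : ∀ u : V, Even (G.degree u)) :
    ∃ (u : V) (p : G.Walk u u), p.IsEulerian := by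
  obtain ⟨u₀⟩ := hconn.nonempty
  let P : ℕ → Prop := fun n => ∃ (a b : V) (q : G.Walk a b), q.IsTrail ∧ q.length = n
  have hbound : ∀ n, P n → n ≤ G.edgeFinset.card := by
    rintro n ⟨a, b, q, hq, rfl⟩
    exact hq.length_le_card_edgeFinset
  classical
  have hP0 : P 0 := ⟨u₀, u₀, Walk.nil, Walk.IsTrail.nil, rfl⟩
  obtain ⟨u, v, p, hp, hlen⟩ := Nat.findGreatest_spec (Nat.zero_le G.edgeFinset.card) hP0
  have hmax : ∀ (a b : V) (q : G.Walk a b), q.IsTrail → q.length ≤ p.length := by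
    intro a b q hq
    rw [hlen]
    exact Nat.le_findGreatest (hbound _ ⟨a, b, q, hq, rfl⟩) ⟨a, b, q, hq, rfl⟩
  obtain rfl := closed_of_longest_trail G heven p hp hmax
  exact ⟨u, p, longest_trail_isEulerian G hconn p hp hmax⟩

/-- Let `G` be a finite simple connected graph in which every vertex has even
degree, with an odd number of edges, and let `uG` be any vertex.  Then `G` admits a
`2`-edge-coloring such that, at every vertex `u ≠ uG`, each color appears on exactly
`d_G(u)/2` incident edges, while at `uG` one color appears on exactly `d_G(uG)/2 + 1`
incident edges and the other on exactly `d_G(uG)/2 - 1` of them. -/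
theorem balanced_two_coloring_odd_size {V : Type*} [Fintype V] [DecidableEq V]
    (G : SimpleGraph V) [DecidableRel G.Adj] (hconn : G.Connected)
    (heven : ∀ u : V, Even (G.degree u)) (hodd : Odd G.edgeFinset.card) (uG : V) :
    ∃ c : Sym2 V → Fin 2,
      (∀ u : V, u ≠ uG → ∀ α : Fin 2,
        ((G.incidenceFinset u).filter (fun e => c e = α)).card = G.degree u / 2) ∧
      (∃ α β : Fin 2, α ≠ β ∧
        ((G.incidenceFinset uG).filter (fun e => c e = α)).card = G.degree uG / 2 + 1 ∧
        ((G.incidenceFinset uG).filter (fun e => c e = β)).card = G.degree uG / 2 - 1) := by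
  obtain ⟨u, p, hp⟩ := exists_eulerian_circuit G hconn heven
  -- An odd number of edges rules out the one-vertex graph, so `uG` lies on an edge.
  have hG : ∃ w, G.Adj uG w := by
    obtain ⟨e, he⟩ := Finset.card_pos.1 hodd.pos
    rw [mem_edgeFinset] at he
    induction e with
    | _ x y =>
      have hxy : x ≠ y := G.ne_of_adj he
      have : Nontrivial V := ⟨x, y, hxy⟩
      exact hconn.preconnected.exists_adj_of_nontrivial uG
  obtain ⟨w, hw⟩ := hG
  have hsupp : uG ∈ p.support := p.fst_mem_support_of_mem_edges (hp.mem_edges_iff.2 hw)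
  have hq : (p.rotate uG hsupp).IsTrail := hp.isTrail.rotate hsupp
  have hset : (p.rotate uG hsupp).edges.toFinset = G.edgeFinset := by
    ext e
    rw [List.mem_toFinset, (p.rotate_edges uG hsupp).perm.mem_iff, hp.mem_edges_iff, mem_edgeFinset]
  generalize p.rotate uG hsupp = q at hq hset
  have hlen : Odd q.length := by
    rw [← Walk.length_edges, ← List.toFinset_card_of_nodup hq.edges_nodup, hset]
    exact hodd
  obtain ⟨c, hc⟩ := exists_alternating_coloring q hq
  have hdiff : ∀ x : V, (((G.incidenceFinset x).filter (fun e => c e = 0)).card : ℤ) -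
      ((G.incidenceFinset x).filter (fun e => c e = 1)).card = if x = uG then 2 else 0 := by
    intro x
    have h := hc x
    rw [← List.sum_toFinset _ hq.edges_nodup, hset, ← Finset.sum_filter,
      ← incidenceFinset_eq_filter, hlen.neg_one_pow] at h
    have hsign : ∀ a : Fin 2,
        colorSign a = (if a = 0 then 1 else 0) - (if a = 1 then 1 else 0) := by decide
    simp only [hsign, Finset.sum_sub_distrib, Finset.sum_boole] at h
    rw [h]
    split_ifs <;> norm_num
  have hsum : ∀ x : V, ((G.incidenceFinset x).filter (fun e => c e = 0)).card +
      ((G.incidenceFinset x).filter (fun e => c e = 1)).card = G.degree x := by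
    intro x
    have h01 : ∀ a : Fin 2, a = 1 ↔ ¬ a = 0 := by decide
    simp only [h01]
    rw [Finset.card_filter_add_card_filter_not, card_incidenceFinset_eq_degree]
  refine ⟨c, fun x hx α => ?_, 0, 1, by decide, ?_, ?_⟩
  · have h1 := hdiff x
    have h2 := hsum x
    rw [if_neg hx] at h1
    fin_cases α <;> simp only [Fin.zero_eta, Fin.mk_one] <;> omega
  all_goals
    have h1 := hdiff uG
    have h2 := hsum uG
    rw [if_pos rfl] at h1
    omega
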